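/- arXiv:0910.1123 — 2 statements merged into one kernel-verified Lean document; each statement's English description precedes it below -/
import Mathlib

section
/- (Paper's Lemma 1) For every real x with 0 ≤ x ≤ 1 − 1/N, the truncated degree distribution satisfies ρ^N(x) ≥ (μ + S_p(x)) / (μ + G_N(p) + 1), with strict inequality whenever 0 < x ≤ 1 − 1/N. -/
open Real Filter

noncomputable def qp (p x : ℝ) : ℝ :=
  (Real.sqrt ((1 - p) ^ 2 + 4 * p * x) - (1 - p)) / (2 * p)

noncomputable def aCoeff (p : ℝ) (i : ℕ) : ℝ :=
  (∑ k ∈ Finset.range i, (Nat.choose (2 * i - 1) k : ℝ) * p ^ k) /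
    (i * (1 + p) ^ (2 * i - 1))

noncomputable def Gpart (p : ℝ) (N : ℕ) : ℝ := ∑ i ∈ Finset.Icc 1 N, aCoeff p i

noncomputable def Sp (p x : ℝ) : ℝ := - Real.log (qp p (1 - x))

noncomputable def rhoN (p μ : ℝ) (N : ℕ) (x : ℝ) : ℝ :=
  (μ + (∑ i ∈ Finset.Icc 1 N, aCoeff p i * x ^ i) + x ^ N) / (μ + Gpart p N + 1)

noncomputable def lamBarN (p μ : ℝ) (N : ℕ) (x : ℝ) : ℝ :=
  Real.exp (-(μ + Gpart p N + 1) * rhoN p μ N (1 - x))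

noncomputable def deSym (p μ : ℝ) (N : ℕ) (x : ℝ) : ℝ :=
  ((1 - p) + p * lamBarN p μ N x) * lamBarN p μ N x

noncomputable def cornerMap (p μ : ℝ) (N : ℕ) (α ε₁ ε₂ : ℝ) (y : ℝ) : ℝ :=
  ((1 - p) + p * Real.exp (-(α * (1 - ε₁)))) *
    Real.exp (-(α * (1 - ε₂)) * rhoN p μ N (1 - y))

/-- The convolution identity for central binomial coefficients. -/
theorem sum_antidiagonal_centralBinom_mul (n : ℕ) :
    ∑ ij ∈ Finset.HasAntidiagonal.antidiagonal n, (Nat.centralBinom ij.1 : ℝ) * Nat.centralBinom ij.2 = 4 ^ n := by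
  have symm_sum : ∀ n : ℕ, 2 * ∑ ij ∈ Finset.HasAntidiagonal.antidiagonal n,
      (ij.1 : ℝ) * ((Nat.centralBinom ij.1 : ℝ) * Nat.centralBinom ij.2) =
      n * ∑ ij ∈ Finset.HasAntidiagonal.antidiagonal n,
        (Nat.centralBinom ij.1 : ℝ) * Nat.centralBinom ij.2 := by
    intro n
    have hswap : ∑ ij ∈ Finset.HasAntidiagonal.antidiagonal n,
        (ij.1 : ℝ) * ((Nat.centralBinom ij.1 : ℝ) * Nat.centralBinom ij.2) =
        ∑ ij ∈ Finset.HasAntidiagonal.antidiagonal n,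
        (ij.2 : ℝ) * ((Nat.centralBinom ij.1 : ℝ) * Nat.centralBinom ij.2) := by
      rw [← Finset.Nat.sum_antidiagonal_swap]
      refine Finset.sum_congr rfl fun ij _ => ?_
      simp only [Prod.fst_swap, Prod.snd_swap]
      ring
    rw [two_mul]
    nth_rewrite 2 [hswap]
    rw [← Finset.sum_add_distrib, Finset.mul_sum]
    refine Finset.sum_congr rfl fun ij hij => ?_
    have h : (ij.1 : ℝ) + ij.2 = n := by exact_mod_cast Finset.HasAntidiagonal.mem_antidiagonal.mp hij
    rw [← h]
    ring
  induction n with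
  | zero => simp
  | succ n ih =>
    have hsucc := symm_sum (n + 1)
    rw [Finset.Nat.sum_antidiagonal_succ] at hsucc
    have hstep : ∑ ij ∈ Finset.HasAntidiagonal.antidiagonal n, ((ij.1 + 1 : ℕ) : ℝ) *
        ((Nat.centralBinom (ij.1 + 1) : ℝ) * Nat.centralBinom ij.2) =
        2 * (2 * ∑ ij ∈ Finset.HasAntidiagonal.antidiagonal n,
          (ij.1 : ℝ) * ((Nat.centralBinom ij.1 : ℝ) * Nat.centralBinom ij.2)) +
        2 * ∑ ij ∈ Finset.HasAntidiagonal.antidiagonal n,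
          (Nat.centralBinom ij.1 : ℝ) * Nat.centralBinom ij.2 := by
      simp only [Finset.mul_sum, ← Finset.sum_add_distrib]
      refine Finset.sum_congr rfl fun ij _ => ?_
      have h : ((ij.1 + 1 : ℕ) : ℝ) * Nat.centralBinom (ij.1 + 1) =
          2 * (2 * ij.1 + 1) * Nat.centralBinom ij.1 := by
        exact_mod_cast Nat.succ_mul_centralBinom_succ ij.1
      rw [← mul_assoc, h]
      ring
    simp only [Nat.cast_zero, zero_mul, zero_add] at hsucc
    rw [hstep, symm_sum n, ih] at hsucc
    have hn : ((n + 1 : ℕ) : ℝ) ≠ 0 := by positivity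
    apply mul_left_cancel₀ hn
    rw [← hsucc]
    push_cast
    ring

/-- The generating function of the central binomial coefficients. -/
theorem hasSum_centralBinom_mul_pow {z : ℝ} (hz0 : 0 ≤ z) (hz : 4 * z < 1) :
    HasSum (fun n : ℕ => (Nat.centralBinom n : ℝ) * z ^ n) (1 / √(1 - 4 * z)) := by
  have hs : Summable fun n : ℕ => (Nat.centralBinom n : ℝ) * z ^ n := by
    refine Summable.of_nonneg_of_le (fun n => by positivity) (fun n => ?_)
      (summable_geometric_of_lt_one (by positivity : 0 ≤ 4 * z) hz)
    rw [mul_pow]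
    gcongr
    exact_mod_cast Nat.centralBinom_le_four_pow n
  have hsq := tsum_mul_tsum_eq_tsum_sum_antidiagonal_of_summable_norm hs.norm hs.norm
  have hconv : ∀ n : ℕ, ∑ kl ∈ Finset.HasAntidiagonal.antidiagonal n, (Nat.centralBinom kl.1 : ℝ) * z ^ kl.1 *
      ((Nat.centralBinom kl.2 : ℝ) * z ^ kl.2) = (4 * z) ^ n := by
    intro n
    rw [mul_pow, ← sum_antidiagonal_centralBinom_mul, Finset.sum_mul]
    refine Finset.sum_congr rfl fun kl hkl => ?_
    rw [← Finset.HasAntidiagonal.mem_antidiagonal.mp hkl, pow_add]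
    ring
  simp only [hconv] at hsq
  rw [tsum_geometric_of_lt_one (by positivity) hz] at hsq
  have h0 : 0 ≤ ∑' n : ℕ, (Nat.centralBinom n : ℝ) * z ^ n :=
    tsum_nonneg fun n => by positivity
  have hval : ∑' n : ℕ, (Nat.centralBinom n : ℝ) * z ^ n = 1 / √(1 - 4 * z) := by
    rw [one_div, ← Real.sqrt_inv, ← hsq, Real.sqrt_mul_self h0]
  rw [← hval]
  exact hs.hasSum

/-- Pascal's rule for truncated binomial expansions. -/
theorem sum_range_succ_choose_succ_mul_pow (p : ℝ) (n m : ℕ) :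
    ∑ k ∈ Finset.range (m + 1), ((n + 1).choose k : ℝ) * p ^ k =
      (1 + p) * ∑ k ∈ Finset.range (m + 1), (n.choose k : ℝ) * p ^ k -
        (n.choose m : ℝ) * p ^ (m + 1) := by
  induction m with
  | zero => simp
  | succ m ih =>
    rw [Finset.sum_range_succ, ih, Finset.sum_range_succ _ (m + 1), Nat.choose_succ_succ]
    push_cast
    ring

/-- The coefficient of `x ^ j` in the derivative of `∑ aCoeff p i * x ^ i`. -/
noncomputable def derivCoeff (p : ℝ) (j : ℕ) : ℝ :=
  (∑ k ∈ Finset.range (j + 1), ((2 * j + 1).choose k : ℝ) * p ^ k) / (1 + p) ^ (2 * j + 1)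

theorem aCoeff_succ_mul (p : ℝ) (j : ℕ) : aCoeff p (j + 1) * (j + 1) = derivCoeff p j := by
  have h : 2 * (j + 1) - 1 = 2 * j + 1 := by omega
  have hj : (j : ℝ) + 1 ≠ 0 := by positivity
  rw [aCoeff, derivCoeff, h]
  push_cast
  rw [mul_comm ((j : ℝ) + 1), ← div_div, div_mul_cancel₀ _ hj]

theorem derivCoeff_le_one {p : ℝ} (hp : 0 < p) (j : ℕ) : derivCoeff p j ≤ 1 := by
  rw [derivCoeff, div_le_one (by positivity), add_comm 1 p, add_pow]
  simp only [one_pow, mul_one]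
  refine (Finset.sum_le_sum_of_subset_of_nonneg (Finset.range_mono (by omega : j + 1 ≤ 2 * j + 1 + 1))
    fun k _ _ => by positivity).trans_eq ?_
  exact Finset.sum_congr rfl fun k _ => mul_comm _ _

theorem derivCoeff_succ {p : ℝ} (hp : 0 < p) (j : ℕ) :
    derivCoeff p (j + 1) = derivCoeff p j +
      (1 - p) / (2 * (1 + p)) * (Nat.centralBinom (j + 1) * (p / (1 + p) ^ 2) ^ (j + 1)) := by
  have hc : ((2 * j + 1 + 1).choose (j + 1) : ℝ) = Nat.centralBinom (j + 1) := by
    rw [Nat.centralBinom_eq_two_mul_choose]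
    rfl
  have hc' : ((2 * j + 1).choose (j + 1) : ℝ) = Nat.centralBinom (j + 1) / 2 := by
    rw [← hc, Nat.choose_succ_succ (2 * j + 1) j, Nat.choose_symm_half]
    push_cast
    ring
  have hnum : ∑ k ∈ Finset.range (j + 1 + 1), ((2 * (j + 1) + 1).choose k : ℝ) * p ^ k =
      (1 + p) ^ 2 * ∑ k ∈ Finset.range (j + 1), ((2 * j + 1).choose k : ℝ) * p ^ k +
        (1 - p) * (Nat.centralBinom (j + 1) / 2) * p ^ (j + 1) := by
    rw [show 2 * (j + 1) + 1 = 2 * j + 1 + 1 + 1 by ring,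
      sum_range_succ_choose_succ_mul_pow, sum_range_succ_choose_succ_mul_pow,
      Finset.sum_range_succ, hc, hc']
    ring
  have hp1 : 1 + p ≠ 0 := by positivity
  rw [derivCoeff, derivCoeff, hnum, div_pow, ← pow_mul,
    show 2 * (j + 1) + 1 = 2 * j + 1 + 2 by ring, show 2 * (j + 1) = 2 * j + 1 + 1 by ring,
    pow_add _ (2 * j + 1) 2, pow_succ _ (2 * j + 1)]
  field_simp

theorem derivCoeff_eq {p : ℝ} (hp : 0 < p) (j : ℕ) :
    derivCoeff p j = 1 / 2 + (1 - p) / (2 * (1 + p)) *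
      ∑ i ∈ Finset.range (j + 1), (Nat.centralBinom i : ℝ) * (p / (1 + p) ^ 2) ^ i := by
  induction j with
  | zero =>
    have hp1 : 1 + p ≠ 0 := by positivity
    simp [derivCoeff]
    field_simp
    ring
  | succ j ih =>
    rw [derivCoeff_succ hp, ih, Finset.sum_range_succ _ (j + 1)]
    ring

theorem one_sub_mul_sum_derivCoeff {p : ℝ} (hp : 0 < p) (x : ℝ) (M : ℕ) :
    (1 - x) * ∑ j ∈ Finset.range (M + 1), derivCoeff p j * x ^ j + derivCoeff p M * x ^ (M + 1) =
      1 / 2 + (1 - p) / (2 * (1 + p)) *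
        ∑ i ∈ Finset.range (M + 1), (Nat.centralBinom i : ℝ) * (p / (1 + p) ^ 2 * x) ^ i := by
  induction M with
  | zero =>
    have h := derivCoeff_eq hp 0
    simp only [zero_add, Finset.sum_range_one, pow_zero, mul_one] at h ⊢
    rw [← h]
    ring
  | succ M ih =>
    rw [Finset.sum_range_succ _ (M + 1), Finset.sum_range_succ _ (M + 1), mul_add, mul_add,
      ← add_assoc (1 / 2 : ℝ), ← ih, derivCoeff_succ hp, mul_pow]
    ring

theorem one_sub_mul_sum_derivCoeff_add_le {p x : ℝ} (hp : 0 < p) (hx0 : 0 ≤ x) (hx1 : x ≤ 1)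
    (N k : ℕ) :
    (1 - x) * ∑ j ∈ Finset.range (N + k), derivCoeff p j * x ^ j + x ^ (N + k) ≤
      (1 - x) * ∑ j ∈ Finset.range N, derivCoeff p j * x ^ j + x ^ N := by
  induction k with
  | zero => simp
  | succ k ih =>
    refine le_trans ?_ ih
    rw [← add_assoc, Finset.sum_range_succ, pow_succ]
    have h : derivCoeff p (N + k) * ((1 - x) * x ^ (N + k)) ≤ 1 * ((1 - x) * x ^ (N + k)) :=
      mul_le_mul_of_nonneg_right (derivCoeff_le_one hp _)
        (mul_nonneg (by linarith) (by positivity))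
    linarith

theorem inv_sqrt_one_sub_four_mul {p : ℝ} (hp : 0 < p) (x : ℝ) :
    1 / √(1 - 4 * (p / (1 + p) ^ 2 * x)) = (1 + p) / √((1 - p) ^ 2 + 4 * p * (1 - x)) := by
  have hp1 : 0 < 1 + p := by positivity
  have h : 1 - 4 * (p / (1 + p) ^ 2 * x) = ((1 - p) ^ 2 + 4 * p * (1 - x)) / (1 + p) ^ 2 := by
    field_simp
    ring
  rw [h, Real.sqrt_div' _ (by positivity), Real.sqrt_sq hp1.le, one_div_div]

theorem half_add_le_sum_derivCoeff {p x : ℝ} (hp0 : 0 < p) (hp1 : p < 1) (hx0 : 0 ≤ x)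
    (hx1 : x < 1) (N : ℕ) :
    1 / 2 + (1 - p) / (2 * √((1 - p) ^ 2 + 4 * p * (1 - x))) ≤
      (1 - x) * ∑ j ∈ Finset.range N, derivCoeff p j * x ^ j + x ^ N := by
  have hz0 : 0 ≤ p / (1 + p) ^ 2 * x := by positivity
  have hz1 : 4 * (p / (1 + p) ^ 2 * x) < 1 := by
    have hw : p / (1 + p) ^ 2 ≤ 1 / 4 := by
      rw [div_le_div_iff₀ (by positivity) (by norm_num)]
      nlinarith [sq_nonneg (1 - p)]
    nlinarith
  have hlim := (((hasSum_centralBinom_mul_pow hz0 hz1).tendsto_sum_nat.const_mul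
    ((1 - p) / (2 * (1 + p)))).const_add (1 / 2)).comp (tendsto_add_atTop_nat 1)
  have hval : 1 / 2 + (1 - p) / (2 * (1 + p)) * (1 / √(1 - 4 * (p / (1 + p) ^ 2 * x))) =
      1 / 2 + (1 - p) / (2 * √((1 - p) ^ 2 + 4 * p * (1 - x))) := by
    have hr : √((1 - p) ^ 2 + 4 * p * (1 - x)) ≠ 0 := by
      have : 0 < 1 - x := by linarith
      positivity
    rw [inv_sqrt_one_sub_four_mul hp0]
    field_simp
  rw [hval] at hlim
  refine le_of_tendsto hlim ?_
  filter_upwards [eventually_ge_atTop N] with M hM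
  obtain ⟨k, rfl⟩ := Nat.exists_eq_add_of_le hM
  have h1 := one_sub_mul_sum_derivCoeff hp0 x (N + k)
  have h2 := one_sub_mul_sum_derivCoeff_add_le hp0 hx0 hx1.le N (k + 1)
  have h3 : derivCoeff p (N + k) * x ^ (N + k + 1) ≤ 1 * x ^ (N + k + 1) :=
    mul_le_mul_of_nonneg_right (derivCoeff_le_one hp0 _) (by positivity)
  rw [← add_assoc] at h2
  simp only [Function.comp_apply]
  linarith

theorem hasDerivAt_Sp {p x : ℝ} (hp0 : 0 < p) (hp1 : p < 1) (hx : x < 1) :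
    HasDerivAt (Sp p)
      ((1 / 2 + (1 - p) / (2 * √((1 - p) ^ 2 + 4 * p * (1 - x)))) / (1 - x)) x := by
  have hx' : 0 < 1 - x := by linarith
  have hp' : 0 < 1 - p := by linarith
  have hA : 0 < (1 - p) ^ 2 + 4 * p * (1 - x) := by positivity
  have hlin : HasDerivAt (fun t : ℝ => (1 - p) ^ 2 + 4 * p * (1 - t)) (4 * p * (-1)) x :=
    (((hasDerivAt_id x).const_sub 1).const_mul (4 * p)).const_add _
  have hq : HasDerivAt (fun t : ℝ => qp p (1 - t)) _ x :=
    ((hlin.sqrt hA.ne').sub_const (1 - p)).div_const (2 * p)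
  have hr : 0 < √((1 - p) ^ 2 + 4 * p * (1 - x)) := Real.sqrt_pos.mpr hA
  have hr2 := Real.sq_sqrt hA.le
  have hgt : 0 < √((1 - p) ^ 2 + 4 * p * (1 - x)) - (1 - p) := by
    rw [sub_pos]
    apply Real.lt_sqrt_of_sq_lt
    nlinarith [mul_pos hp0 hx']
  have hqpos : 0 < qp p (1 - x) := div_pos hgt (by positivity)
  refine ((hq.log hqpos.ne').neg).congr_deriv ?_
  unfold qp
  generalize √((1 - p) ^ 2 + 4 * p * (1 - x)) = r at *
  have hx'' : 1 - x = (r - (1 - p)) * (r + (1 - p)) / (4 * p) := by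
    field_simp
    linarith
  have hsum : r + (1 - p) ≠ 0 := by positivity
  have hgt' := hgt.ne'
  rw [hx'']
  field_simp

theorem Sp_zero {p : ℝ} (hp : 0 < p) : Sp p 0 = 0 := by
  have h : (1 - p) ^ 2 + 4 * p * (1 - 0) = (1 + p) ^ 2 := by ring
  rw [Sp, qp, h, Real.sqrt_sq (by positivity), show 1 + p - (1 - p) = 2 * p by ring,
    div_self (by positivity), Real.log_one, neg_zero]

theorem Sp_le_sum_add {p x : ℝ} (hp0 : 0 < p) (hp1 : p < 1) (hx0 : 0 ≤ x) (hx1 : x < 1) (N : ℕ) :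
    Sp p x ≤ ∑ i ∈ Finset.Icc 1 N, aCoeff p i * x ^ i + x ^ (N + 1) / ((N + 1) * (1 - x)) := by
  have hx' : 0 < 1 - x := by linarith
  have hIcc : Finset.Icc 1 N = Finset.Ico 1 (N + 1) := by ext; simp
  rw [hIcc, Finset.sum_Ico_eq_sum_range, Nat.add_sub_cancel]
  have hB : ∀ t : ℝ, HasDerivAt
      (fun t : ℝ => ∑ j ∈ Finset.range N, aCoeff p (1 + j) * t ^ (1 + j) +
        t ^ (N + 1) / ((N + 1) * (1 - x)))
      (∑ j ∈ Finset.range N, derivCoeff p j * t ^ j + t ^ N / (1 - x)) t := by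
    intro t
    refine HasDerivAt.add (HasDerivAt.fun_sum fun j _ => ?_) ?_
    · refine ((hasDerivAt_pow (1 + j) t).const_mul (aCoeff p (1 + j))).congr_deriv ?_
      rw [← aCoeff_succ_mul, Nat.add_sub_cancel_left, add_comm 1 j]
      push_cast
      ring
    · refine ((hasDerivAt_pow (N + 1) t).div_const ((N + 1) * (1 - x))).congr_deriv ?_
      rw [Nat.add_sub_cancel]
      push_cast
      field_simp
  have hlt : ∀ t ∈ Set.Icc 0 x, t < 1 := fun t ht => ht.2.trans_lt hx1
  refine image_le_of_deriv_right_le_deriv_boundary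
    (fun t ht => (hasDerivAt_Sp hp0 hp1 (hlt t ht)).continuousAt.continuousWithinAt)
    (fun t ht => (hasDerivAt_Sp hp0 hp1 (hlt t (Set.Ico_subset_Icc_self ht))).hasDerivWithinAt)
    ?_ (fun t _ => (hB t).continuousAt.continuousWithinAt)
    (fun t _ => (hB t).hasDerivWithinAt) (fun t ht => ?_) (Set.right_mem_Icc.mpr hx0)
  · rw [Sp_zero hp0]
    simp [add_comm 1]
  · have ht1 : 0 < 1 - t := by linarith [ht.2]
    have hpow : t ^ N / (1 - t) ≤ t ^ N / (1 - x) :=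
      div_le_div_of_nonneg_left (pow_nonneg ht.1 N) hx' (by linarith [ht.2])
    refine le_trans ?_ (add_le_add_right hpow _)
    rw [div_le_iff₀ ht1, add_mul, div_mul_cancel₀ _ ht1.ne',
      mul_comm (∑ j ∈ Finset.range N, derivCoeff p j * t ^ j)]
    exact half_add_le_sum_derivCoeff hp0 hp1 ht.1 (by linarith) N

theorem pow_succ_div_lt_pow {x : ℝ} {N : ℕ} (hN : 1 ≤ N) (hx0 : 0 < x)
    (hx : x ≤ 1 - 1 / (N : ℝ)) : x ^ (N + 1) / ((N + 1) * (1 - x)) < x ^ N := by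
  have hN' : (0 : ℝ) < N := by exact_mod_cast hN
  have hinv : 0 < 1 / (N : ℝ) := by positivity
  have hx' : 0 < 1 - x := by linarith
  have hNx : 1 ≤ N * (1 - x) := by
    calc (1 : ℝ) = N * (1 / N) := by field_simp
      _ ≤ N * (1 - x) := by gcongr; linarith
  rw [div_lt_iff₀ (by positivity), pow_succ]
  have : x < (N + 1) * (1 - x) := by linarith
  gcongr

theorem stmt7 (p : ℝ) (hp0 : 0 < p) (hp1 : p < 1) (μ : ℝ) (hμ : 0 < μ)
    (N : ℕ) (hN : 1 ≤ N) :
    ∀ x : ℝ, 0 ≤ x → x ≤ 1 - 1 / (N : ℝ) →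
      (μ + Sp p x) / (μ + Gpart p N + 1) ≤ rhoN p μ N x ∧
      (0 < x → (μ + Sp p x) / (μ + Gpart p N + 1) < rhoN p μ N x) := by
  intro x hx0 hx
  have hG : 0 ≤ Gpart p N := Finset.sum_nonneg fun i _ => by unfold aCoeff; positivity
  have hden : 0 < μ + Gpart p N + 1 := by linarith
  have hstrict : 0 < x → (μ + Sp p x) / (μ + Gpart p N + 1) < rhoN p μ N x := by
    intro hxpos
    have hinv : 0 < 1 / (N : ℝ) := by positivity
    have h1 := Sp_le_sum_add hp0 hp1 hx0 (by linarith) N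
    have h2 := pow_succ_div_lt_pow hN hxpos hx
    rw [rhoN, div_lt_div_iff_of_pos_right hden]
    linarith
  refine ⟨?_, hstrict⟩
  rcases hx0.eq_or_lt with rfl | hxpos
  · have hsum : 0 ≤ ∑ i ∈ Finset.Icc 1 N, aCoeff p i * (0 : ℝ) ^ i :=
      Finset.sum_nonneg fun i _ => by unfold aCoeff; positivity
    rw [rhoN, Sp_zero hp0, div_le_div_iff_of_pos_right hden, zero_pow (by omega)]
    linarith
  · exact (hstrict hxpos).le
end

section
/- The integral of the series S_p over [0,1] satisfies ∫₀¹ S_p(x) dx = 1 − p/2; equivalently, ∑_{i=1}^∞ a_i(p)/(i+1) = 1 − p/2. (This is the normalization constant used to compute the design rate R = (1−ε)(1−e^{−α})/(μ + 1 − p/2) of the LT ensemble in Theorem 1.) -/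
open Real Filter

section Integral

variable {p : ℝ}

lemma qp_zero (hp1 : p < 1) : qp p 0 = 0 := by
  have h : (0 : ℝ) ≤ 1 - p := by linarith
  simp [qp, Real.sqrt_sq h]

lemma qp_one (hp0 : 0 < p) : qp p 1 = 1 := by
  have h : (1 - p) ^ 2 + 4 * p * 1 = (1 + p) ^ 2 := by ring
  rw [qp, h, Real.sqrt_sq (by linarith)]
  field_simp
  ring

lemma continuous_qp (p : ℝ) : Continuous (qp p) := by
  unfold qp
  fun_prop

lemma hasDerivAt_qp (hp0 : 0 < p) {x : ℝ} (hx : 0 < x) :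
    HasDerivAt (qp p) (1 / (1 - p + 2 * p * qp p x)) x := by
  have hpos : 0 < (1 - p) ^ 2 + 4 * p * x := by positivity
  have hlin : HasDerivAt (fun y : ℝ => (1 - p) ^ 2 + 4 * p * y) (4 * p) x := by
    simpa using ((hasDerivAt_id x).const_mul (4 * p)).const_add ((1 - p) ^ 2)
  have hs := ((hlin.sqrt hpos.ne').sub_const (1 - p)).div_const (2 * p)
  have hden : 1 - p + 2 * p * qp p x = Real.sqrt ((1 - p) ^ 2 + 4 * p * x) := by
    unfold qp
    field_simp
    ring
  have hsq : Real.sqrt ((1 - p) ^ 2 + 4 * p * x) ≠ 0 := (Real.sqrt_pos.2 hpos).ne'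
  rw [hden]
  refine hs.congr_deriv ?_
  field_simp
  norm_num

lemma qp_pos (hp0 : 0 < p) {x : ℝ} (hx : 0 < x) : 0 < qp p x := by
  have h : 1 - p < Real.sqrt ((1 - p) ^ 2 + 4 * p * x) :=
    Real.lt_sqrt_of_sq_lt (by nlinarith [mul_pos hp0 hx])
  exact div_pos (by linarith) (by linarith)

lemma qp_le_one (hp0 : 0 < p) {x : ℝ} (hx : x ≤ 1) : qp p x ≤ 1 := by
  rw [← qp_one hp0]
  unfold qp
  gcongr

lemma integral_neg_log_qp (hp0 : 0 < p) (hp1 : p < 1) :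
    (∫ x in (0 : ℝ)..1, -Real.log (qp p x)) = 1 - p / 2 := by
  set F : ℝ → ℝ := fun x =>
    -((1 - p + p * qp p x) * (qp p x * Real.log (qp p x))) + (1 - p) * qp p x
      + p / 2 * qp p x ^ 2 with hF
  have hq := continuous_qp p
  have hcont : Continuous F := by
    have hlog : Continuous fun x => qp p x * Real.log (qp p x) :=
      Real.continuous_mul_log.comp hq
    fun_prop
  have hderiv : ∀ x ∈ Set.Ioo (0 : ℝ) 1, HasDerivAt F (-Real.log (qp p x)) x := by
    intro x hx
    have hqx := qp_pos hp0 hx.1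
    have hd := hasDerivAt_qp hp0 hx.1
    have hlog := (Real.hasDerivAt_mul_log hqx.ne').comp x hd
    have hsum := ((((hd.const_mul p).const_add (1 - p)).mul hlog).neg.add
      (hd.const_mul (1 - p))).add ((hd.pow 2).const_mul (p / 2))
    have hne : 1 - p + 2 * p * qp p x ≠ 0 := by nlinarith [mul_pos hp0 hqx]
    have hinv := mul_one_div_cancel hne
    refine hsum.congr_deriv ?_
    simp only [Function.comp_apply]
    generalize 1 / (1 - p + 2 * p * qp p x) = d at hinv ⊢
    push_cast
    linear_combination -Real.log (qp p x) * hinv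
  have hnonneg : ∀ x ∈ Set.Ioo (0 : ℝ) 1, 0 ≤ -Real.log (qp p x) := fun x hx =>
    neg_nonneg.2 (Real.log_nonpos (qp_pos hp0 hx.1).le (qp_le_one hp0 hx.2.le))
  have hint : IntervalIntegrable (fun x => -Real.log (qp p x)) MeasureTheory.volume 0 1 := by
    rw [intervalIntegrable_iff_integrableOn_Ioc_of_le zero_le_one]
    exact intervalIntegral.integrableOn_deriv_of_nonneg hcont.continuousOn hderiv hnonneg
  rw [intervalIntegral.integral_eq_sub_of_hasDerivAt_of_le zero_le_one hcont.continuousOn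
    hderiv hint]
  simp only [hF, qp_zero hp1, qp_one hp0, Real.log_one]
  ring

lemma integral_Sp (hp0 : 0 < p) (hp1 : p < 1) :
    (∫ x in (0 : ℝ)..1, Sp p x) = 1 - p / 2 := by
  rw [← integral_neg_log_qp hp0 hp1]
  simpa [Sp] using
    intervalIntegral.integral_comp_sub_left (a := 0) (b := 1) (fun x => -Real.log (qp p x)) 1

end Integral

section Catalan

lemma catalan_succ_mul_pow (z : ℝ) (n : ℕ) :
    (catalan (n + 1) : ℝ) * z ^ n =
      ∑ ij ∈ Finset.HasAntidiagonal.antidiagonal n,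
        ((catalan ij.1 : ℝ) * z ^ ij.1) * ((catalan ij.2 : ℝ) * z ^ ij.2) := by
  rw [catalan_succ', Nat.cast_sum, Finset.sum_mul]
  refine Finset.sum_congr rfl fun ij hij => ?_
  rw [← Finset.HasAntidiagonal.mem_antidiagonal.1 hij, pow_add]
  push_cast
  ring

lemma sum_catalan_succ_le_sq {z : ℝ} (hz : 0 ≤ z) (N : ℕ) :
    ∑ n ∈ Finset.range N, (catalan (n + 1) : ℝ) * z ^ n ≤
      (∑ n ∈ Finset.range N, (catalan n : ℝ) * z ^ n) ^ 2 := by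
  simp only [catalan_succ_mul_pow]
  rw [sq, Finset.sum_mul_sum, ← Finset.sum_product', ← Finset.sum_biUnion]
  · refine Finset.sum_le_sum_of_subset_of_nonneg ?_ fun _ _ _ => by positivity
    intro ij hij
    simp only [Finset.mem_biUnion, Finset.mem_range, Finset.HasAntidiagonal.mem_antidiagonal] at hij
    simp only [Finset.mem_product, Finset.mem_range]
    omega
  · intro m _ n _ hmn
    refine Finset.disjoint_left.2 fun ij hm hn => hmn ?_
    rw [← Finset.HasAntidiagonal.mem_antidiagonal.1 hm, ← Finset.HasAntidiagonal.mem_antidiagonal.1 hn]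

lemma hasSum_catalan_mul_pow {p : ℝ} (hp0 : 0 < p) (hp1 : p < 1) :
    HasSum (fun n : ℕ => (catalan n : ℝ) * (p / (1 + p) ^ 2) ^ n) (1 + p) := by
  set z := p / (1 + p) ^ 2 with hz
  have hz0 : 0 < z := by positivity
  have hzp : z * (1 + p) ^ 2 = p := by rw [hz]; field_simp
  have hnn : ∀ n : ℕ, 0 ≤ (catalan n : ℝ) * z ^ n := fun n => by positivity
  have hbound : ∀ N, ∑ n ∈ Finset.range N, (catalan n : ℝ) * z ^ n ≤ 1 + p := by
    intro N
    induction N with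
    | zero => simp; linarith
    | succ N ih =>
      have hs := sum_catalan_succ_le_sq hz0.le N
      have hs0 : 0 ≤ ∑ n ∈ Finset.range N, (catalan n : ℝ) * z ^ n :=
        Finset.sum_nonneg fun n _ => hnn n
      have hsq := pow_le_pow_left₀ hs0 ih 2
      have hz' := mul_le_mul_of_nonneg_left (hs.trans hsq) hz0.le
      rw [Finset.mul_sum, hzp] at hz'
      rw [Finset.sum_range_succ']
      have : ∀ n : ℕ, (catalan (n + 1) : ℝ) * z ^ (n + 1) = z * (catalan (n + 1) * z ^ n) :=
        fun n => by ring
      simp only [this]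
      simp
      linarith
  have hsum : Summable fun n : ℕ => (catalan n : ℝ) * z ^ n :=
    summable_of_sum_range_le hnn hbound
  set C := ∑' n : ℕ, (catalan n : ℝ) * z ^ n with hC
  have hCle : C ≤ 1 + p := hsum.tsum_le_of_sum_range_le hbound
  have hprod : C * C = ∑' n : ℕ, (catalan (n + 1) : ℝ) * z ^ n := by
    rw [hC, tsum_mul_tsum_eq_tsum_sum_antidiagonal_of_summable_norm hsum.norm hsum.norm]
    exact tsum_congr fun n => (catalan_succ_mul_pow z n).symm
  have hquad : C = 1 + z * (C * C) := by
    rw [hprod, ← tsum_mul_left, hC, hsum.tsum_eq_zero_add]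
    simp only [catalan_zero, pow_zero, Nat.cast_one, mul_one]
    congr 1
    exact tsum_congr fun n => by ring
  have hfac : (C - (1 + p)) * (p * C - (1 + p)) = 0 := by
    have : (1 + p) ^ 2 * C = (1 + p) ^ 2 + p * (C * C) := by
      calc (1 + p) ^ 2 * C = (1 + p) ^ 2 * (1 + z * (C * C)) := by rw [← hquad]
        _ = (1 + p) ^ 2 + z * (1 + p) ^ 2 * (C * C) := by ring
        _ = _ := by rw [hzp]
    linear_combination -this
  have hne : p * C - (1 + p) ≠ 0 := by nlinarith
  have hCeq : C = 1 + p := by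
    linarith [(mul_eq_zero.1 hfac).resolve_right hne]
  rw [← hCeq]
  exact hsum.hasSum

end Catalan

section Coefficients

variable {p : ℝ}

lemma sum_choose_mul_pow_succ (p : ℝ) (n m : ℕ) :
    ∑ k ∈ Finset.range (m + 1), ((n + 1).choose k : ℝ) * p ^ k =
      (1 + p) * (∑ k ∈ Finset.range m, (n.choose k : ℝ) * p ^ k) + n.choose m * p ^ m := by
  induction m with
  | zero => simp
  | succ m ih =>
    rw [Finset.sum_range_succ, ih, Finset.sum_range_succ _ m, Nat.choose_succ_succ]
    push_cast
    ring

lemma sum_choose_odd_succ (p : ℝ) (j : ℕ) :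
    ∑ k ∈ Finset.range (j + 2), ((2 * j + 3).choose k : ℝ) * p ^ k =
      (1 + p) ^ 2 * (∑ k ∈ Finset.range (j + 1), ((2 * j + 1).choose k : ℝ) * p ^ k)
        + (1 - p) / 2 * (j + 1).centralBinom * p ^ (j + 1) := by
  have h1 := sum_choose_mul_pow_succ p (2 * j + 2) (j + 1)
  have h2 := sum_choose_mul_pow_succ p (2 * j + 1) j
  have h3 : ((2 * j + 2).choose (j + 1) : ℝ) = 2 * (2 * j + 1).choose j := by
    have : (2 * j + 2).choose (j + 1) = 2 * (2 * j + 1).choose j := by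
      rw [Nat.choose_succ_succ, Nat.choose_symm_half]
      ring
    exact_mod_cast this
  have h4 : ((j + 1).centralBinom : ℝ) = 2 * (2 * j + 1).choose j := by
    rw [← h3]; rfl
  rw [h1, h2, h3, h4, Finset.sum_range_succ _ j]
  ring

lemma aCoeff_succ (p : ℝ) (j : ℕ) :
    aCoeff p (j + 1) =
      (∑ k ∈ Finset.range (j + 1), ((2 * j + 1).choose k : ℝ) * p ^ k) /
        ((j + 1) * (1 + p) ^ (2 * j + 1)) := by
  simp [aCoeff, show 2 * (j + 1) - 1 = 2 * j + 1 by omega]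

lemma aCoeff_nonneg (hp0 : 0 < p) (i : ℕ) : 0 ≤ aCoeff p i := by
  unfold aCoeff
  positivity

lemma aCoeff_succ_le (hp0 : 0 < p) (j : ℕ) : aCoeff p (j + 1) ≤ 1 / ((j : ℝ) + 1) := by
  rw [aCoeff_succ, div_le_div_iff₀ (by positivity) (by positivity), one_mul, mul_comm]
  gcongr
  rw [add_comm 1 p, add_pow]
  simp only [one_pow, mul_one]
  simp_rw [mul_comm (p ^ _)]
  exact Finset.sum_le_sum_of_subset_of_nonneg
    (Finset.range_subset_range.2 (by omega)) fun _ _ _ => by positivity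

lemma tendsto_aCoeff_succ (hp0 : 0 < p) :
    Tendsto (fun j => aCoeff p (j + 1)) atTop (nhds 0) :=
  squeeze_zero (fun j => aCoeff_nonneg hp0 (j + 1)) (aCoeff_succ_le hp0)
    tendsto_one_div_add_atTop_nhds_zero_nat

lemma aCoeff_succ_succ (hp0 : 0 < p) (j : ℕ) :
    (j + 2) * aCoeff p (j + 2) = (j + 1) * aCoeff p (j + 1) +
      (j + 2) * ((1 - p) / (2 * (1 + p)) * (catalan (j + 1) * (p / (1 + p) ^ 2) ^ (j + 1))) := by
  have hcat : ((j + 2 : ℕ) : ℝ) * catalan (j + 1) = (j + 1).centralBinom := by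
    exact_mod_cast succ_mul_catalan_eq_centralBinom (j + 1)
  have h := sum_choose_odd_succ p j
  rw [← hcat] at h
  rw [aCoeff_succ p (j + 1), aCoeff_succ p j, show 2 * (j + 1) + 1 = 2 * j + 3 by ring, h,
    div_pow, ← pow_mul]
  have h1 : (1 + p) ≠ 0 := by positivity
  push_cast
  field_simp
  ring

lemma sum_aCoeff_div (hp0 : 0 < p) (N : ℕ) :
    ∑ i ∈ Finset.range N, aCoeff p (i + 1) / ((i : ℝ) + 2) =
      1 / 2 + (1 - p) / (2 * (1 + p)) *
        (∑ i ∈ Finset.range (N + 1), (catalan i : ℝ) * (p / (1 + p) ^ 2) ^ i)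
        - aCoeff p (N + 1) := by
  induction N with
  | zero =>
    simp [aCoeff_succ]
    field_simp
    ring
  | succ N ih =>
    have h := aCoeff_succ_succ hp0 N
    have hN : (N : ℝ) + 2 ≠ 0 := by positivity
    rw [Finset.sum_range_succ, ih, Finset.sum_range_succ _ (N + 1), mul_add]
    have h' : aCoeff p (N + 2) = (N + 1) / (N + 2) * aCoeff p (N + 1) +
        (1 - p) / (2 * (1 + p)) * (catalan (N + 1) * (p / (1 + p) ^ 2) ^ (N + 1)) := by
      apply mul_left_cancel₀ hN
      rw [h]
      field_simp
    rw [show N + 1 + 1 = N + 2 by rfl, h']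
    field_simp
    ring

lemma hasSum_aCoeff_div (hp0 : 0 < p) (hp1 : p < 1) :
    HasSum (fun i : ℕ => aCoeff p (i + 1) / ((i : ℝ) + 2)) (1 - p / 2) := by
  rw [hasSum_iff_tendsto_nat_of_nonneg fun i =>
    div_nonneg (aCoeff_nonneg hp0 (i + 1)) (by positivity)]
  simp only [sum_aCoeff_div hp0]
  have hcat := (hasSum_catalan_mul_pow hp0 hp1).tendsto_sum_nat.comp (tendsto_add_atTop_nat 1)
  have := ((hcat.const_mul ((1 - p) / (2 * (1 + p)))).const_add (1 / 2)).sub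
    (tendsto_aCoeff_succ hp0)
  have hlim : 1 / 2 + (1 - p) / (2 * (1 + p)) * (1 + p) - 0 = 1 - p / 2 := by
    field_simp
    ring
  rwa [hlim] at this

end Coefficients

theorem stmt11 (p : ℝ) (hp0 : 0 < p) (hp1 : p < 1) :
    (∫ x in (0 : ℝ)..1, Sp p x) = 1 - p / 2 ∧
    HasSum (fun i : ℕ => aCoeff p (i + 1) / ((i : ℝ) + 2)) (1 - p / 2) :=
  ⟨integral_Sp hp0 hp1, hasSum_aCoeff_div hp0 hp1⟩
end
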